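/- Let σ > 0, K > 0, r ∈ ℝ, τ > 0, s > 0, and let Z be a standard normal random variable. Then E[e^{−rτ} max(s·exp((r − σ²/2)τ + σ√τ Z) − K, 0)] = N(d_+) s − N(d_−) K e^{−rτ}, where N is the standard normal cumulative distribution function and d_± = (ln(s/K) + (r ± σ²/2)τ)/(σ√τ). -/

import Mathlib

/-!
With `a = σ √τ` one has `d₊ = d₋ + a`, and `S_T ≥ K` exactly when `Z ≥ -d₋`.
On that half-line, completing the square turns the discounted stock price times the standard normal
density `φ z` into `s * φ (z - a)` (`discounted_payoff_mul_density`). The reflection `z ↦ a - z`,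
together with the evenness of `φ`, identifies the integral of `φ (z - a)` over `[-d, ∞)` with
`N (d + a)` (`setIntegral_Ici_density_shift`). Taking this with shift `a` for the stock term and
shift `0` for the strike term gives the formula.
-/

open MeasureTheory

/-- The cumulative distribution function of the standard normal distribution,
`N(x) = ∫_{-∞}^x (2π)^{-1/2} e^{-z²/2} dz`. -/
noncomputable def stdNormalCDF (x : ℝ) : ℝ :=
  ∫ z in Set.Iic x, (2 * Real.pi) ^ (-(1 : ℝ) / 2) * Real.exp (-z ^ 2 / 2)

/-- The standard normal density, written as in the integrand of `stdNormalCDF`. -/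
noncomputable def stdNormalDensity (z : ℝ) : ℝ :=
  (2 * Real.pi) ^ (-(1 : ℝ) / 2) * Real.exp (-z ^ 2 / 2)

lemma gaussianPDFReal_zero_one_eq_stdNormalDensity (z : ℝ) :
    ProbabilityTheory.gaussianPDFReal 0 1 z = stdNormalDensity z := by
  have h : (2 * Real.pi) ^ (-(1 : ℝ) / 2) = (Real.sqrt (2 * Real.pi))⁻¹ := by
    rw [Real.sqrt_eq_rpow, ← Real.rpow_neg (by positivity)]
    norm_num
  simp [ProbabilityTheory.gaussianPDFReal, stdNormalDensity, h]

lemma integrable_stdNormalDensity : Integrable stdNormalDensity := by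
  have h := ProbabilityTheory.integrable_gaussianPDFReal 0 1
  rwa [funext gaussianPDFReal_zero_one_eq_stdNormalDensity] at h

lemma setIntegral_Ici_density_shift (d a : ℝ) :
    ∫ z in Set.Ici (-d), stdNormalDensity (z - a) = stdNormalCDF (d + a) := by
  change _ = ∫ z in Set.Iic (d + a), stdNormalDensity z
  rw [← integral_indicator measurableSet_Ici, ← integral_indicator measurableSet_Iic,
    ← integral_sub_left_eq_self ((Set.Iic (d + a)).indicator stdNormalDensity) volume a]
  congr 1
  ext z
  have hiff : z ∈ Set.Ici (-d) ↔ a - z ∈ Set.Iic (d + a) := by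
    simp only [Set.mem_Ici, Set.mem_Iic]
    constructor <;> intro h <;> linarith
  have heven : stdNormalDensity (z - a) = stdNormalDensity (a - z) := by
    unfold stdNormalDensity
    congr 3
    ring
  by_cases hz : z ∈ Set.Ici (-d)
  · rw [Set.indicator_of_mem hz, Set.indicator_of_mem (hiff.1 hz), heven]
  · rw [Set.indicator_of_notMem hz, Set.indicator_of_notMem (fun h => hz (hiff.2 h))]

/-- Completing the square: weighting by the density, the discounted lognormal call payoff splits
into a shifted and an unshifted density on the half-line `z ≥ -d` where the price is at least the strike. Here `a`
is the total volatility `σ √τ` and `d` is `d₋`. -/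
lemma discounted_payoff_mul_density (a d K ρ s : ℝ) (ha : 0 < a) (hK : 0 < K) (hs : 0 < s)
    (had : a * d = Real.log (s / K) + (ρ - a ^ 2 / 2)) (z : ℝ) :
    stdNormalDensity z *
        (Real.exp (-ρ) * max (s * Real.exp ((ρ - a ^ 2 / 2) + a * z) - K) 0)
      = (Set.Ici (-d)).indicator
          (fun z => s * stdNormalDensity (z - a) - K * Real.exp (-ρ) * stdNormalDensity z) z := by
  -- The stock price at expiry, relative to the strike.
  have hprice : s * Real.exp ((ρ - a ^ 2 / 2) + a * z) = K * Real.exp (a * (d + z)) := by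
    have h : a * (d + z) = Real.log (s / K) + ((ρ - a ^ 2 / 2) + a * z) := by linarith
    rw [h, Real.exp_add (Real.log (s / K)), Real.exp_log (by positivity)]
    field_simp
  by_cases hz : z ∈ Set.Ici (-d)
  · rw [Set.indicator_of_mem hz]
    have hdz : 0 ≤ d + z := by linarith [Set.mem_Ici.1 hz]
    have hpos : 0 ≤ s * Real.exp ((ρ - a ^ 2 / 2) + a * z) - K := by
      rw [hprice]
      nlinarith [Real.one_le_exp (mul_nonneg ha.le hdz)]
    rw [max_eq_left hpos]
    have hsquare : Real.exp (-(z - a) ^ 2 / 2) =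
        Real.exp (-z ^ 2 / 2) * Real.exp (-ρ) * Real.exp ((ρ - a ^ 2 / 2) + a * z) := by
      rw [← Real.exp_add, ← Real.exp_add]
      congr 1
      ring
    unfold stdNormalDensity
    rw [hsquare]
    ring
  · rw [Set.indicator_of_notMem hz]
    have hdz : d + z ≤ 0 := by
      have := lt_of_not_ge (fun h => hz (Set.mem_Ici.2 h))
      linarith
    have hneg : s * Real.exp ((ρ - a ^ 2 / 2) + a * z) - K ≤ 0 := by
      rw [hprice]
      nlinarith [Real.exp_le_one_iff.2 (mul_nonpos_of_nonneg_of_nonpos ha.le hdz)]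
    rw [max_eq_right hneg, mul_zero, mul_zero]

/-- **Feynman–Kac / risk-neutral expectation for the European call equals the
Black–Scholes formula.** For a standard normal random variable `Z`,
`E[e^{-rτ} max(s exp((r - σ²/2) τ + σ √τ Z) - K, 0)] = N(d₊) s - N(d₋) K e^{-rτ}`,
where `d± = (ln(s/K) + (r ± σ²/2) τ)/(σ √τ)`. -/
theorem call_price_expectation_eq_black_scholes
    {Ω : Type*} [MeasurableSpace Ω] (P : Measure Ω) [IsProbabilityMeasure P]
    (Z : Ω → ℝ) (hmeas : Measurable Z)
    (hZ : Measure.map Z P = ProbabilityTheory.gaussianReal 0 1)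
    (σ K r τ s : ℝ) (hσ : 0 < σ) (hK : 0 < K) (hτ : 0 < τ) (hs : 0 < s)
    (dp dm : ℝ)
    (hdp : dp = (Real.log (s / K) + (r + σ ^ 2 / 2) * τ) / (σ * Real.sqrt τ))
    (hdm : dm = (Real.log (s / K) + (r - σ ^ 2 / 2) * τ) / (σ * Real.sqrt τ)) :
    ∫ ω, Real.exp (-r * τ) *
        max (s * Real.exp ((r - σ ^ 2 / 2) * τ + σ * Real.sqrt τ * Z ω) - K) 0 ∂P
      = stdNormalCDF dp * s - stdNormalCDF dm * K * Real.exp (-r * τ) := by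
  have ha : 0 < σ * Real.sqrt τ := mul_pos hσ (Real.sqrt_pos.2 hτ)
  have hasq : (σ * Real.sqrt τ) ^ 2 = σ ^ 2 * τ := by rw [mul_pow, Real.sq_sqrt hτ.le]
  have hdrift : (r - σ ^ 2 / 2) * τ = r * τ - (σ * Real.sqrt τ) ^ 2 / 2 := by rw [hasq]; ring
  have hdpm : dp = dm + σ * Real.sqrt τ := by
    rw [hdp, hdm, div_add' _ _ _ ha.ne']
    congr 1
    linear_combination -hasq
  have had : σ * Real.sqrt τ * dm =
      Real.log (s / K) + (r * τ - (σ * Real.sqrt τ) ^ 2 / 2) := by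
    rw [hdm, mul_div_cancel₀ _ ha.ne', hdrift]
  rw [hdrift, hdpm, neg_mul]
  generalize σ * Real.sqrt τ = a at *
  have hcont : Continuous (fun z : ℝ => Real.exp (-(r * τ)) *
      max (s * Real.exp (r * τ - a ^ 2 / 2 + a * z) - K) 0) := by fun_prop
  have hshift : Integrable (fun z => stdNormalDensity (z - a)) :=
    integrable_stdNormalDensity.comp_sub_right a
  have hstrike : ∫ z in Set.Ici (-dm), stdNormalDensity z = stdNormalCDF dm := by
    simpa using setIntegral_Ici_density_shift dm 0
  rw [← integral_map hmeas.aemeasurable (f := fun z : ℝ => Real.exp (-(r * τ)) *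
      max (s * Real.exp (r * τ - a ^ 2 / 2 + a * z) - K) 0) hcont.aestronglyMeasurable, hZ,
    ProbabilityTheory.integral_gaussianReal_eq_integral_smul one_ne_zero]
  simp_rw [smul_eq_mul, gaussianPDFReal_zero_one_eq_stdNormalDensity,
    discounted_payoff_mul_density a dm K (r * τ) s ha hK hs had]
  rw [integral_indicator measurableSet_Ici,
    integral_sub (hshift.integrableOn.const_mul s)
      (integrable_stdNormalDensity.integrableOn.const_mul _),
    integral_const_mul, integral_const_mul, setIntegral_Ici_density_shift, hstrike]
  ring
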